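/- Let A be a Hopf algebra over a field k and let σ : A ⊗ A → k be a convolution-invertible unital 2-cocycle, i.e. σ(x₁,y₁)σ(x₂y₂,z) = σ(y₁,z₁)σ(x,y₂z₂) and σ(1,1)=1 for all x,y,z ∈ A. Then the deformed multiplication x ·_σ y := σ(x₁,y₁) x₂y₂ σ⁻¹(x₃,y₃) is associative with unit 1. -/

import Mathlib

/- STATEMENT 0: For a Hopf algebra `A` over a field `k` and a convolution-invertible
unital 2-cocycle `σ : A ⊗ A → k`, the deformed multiplication
`x ·_σ y = σ(x₁,y₁) x₂y₂ σ⁻¹(x₃,y₃)` is associative with unit `1`. -/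

open TensorProduct

universe u

variable {k : Type u} [Field k]

/-- Convolution product of two functionals on a coalgebra. -/
noncomputable def conv {C : Type u} [AddCommGroup C] [Module k C] [Coalgebra k C]
    (f g : C →ₗ[k] k) : C →ₗ[k] k :=
  LinearMap.mul' k k ∘ₗ TensorProduct.map f g ∘ₗ Coalgebra.comul

/-- `x ↦ φ(x₁) • μ(x₂)`. -/
noncomputable def convL {C A : Type u} [AddCommGroup C] [Module k C] [Coalgebra k C]
    [Ring A] [Algebra k A] (φ : C →ₗ[k] k) (μ : C →ₗ[k] A) : C →ₗ[k] A :=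
  (TensorProduct.lid k A).toLinearMap ∘ₗ TensorProduct.map φ μ ∘ₗ Coalgebra.comul

/-- `x ↦ φ(x₂) • μ(x₁)`. -/
noncomputable def convR {C A : Type u} [AddCommGroup C] [Module k C] [Coalgebra k C]
    [Ring A] [Algebra k A] (μ : C →ₗ[k] A) (φ : C →ₗ[k] k) : C →ₗ[k] A :=
  (TensorProduct.rid k A).toLinearMap ∘ₗ TensorProduct.map μ φ ∘ₗ Coalgebra.comul

/-- The deformed multiplication `x ⊗ y ↦ σ(x₁,y₁) x₂y₂ σ'(x₃,y₃)`. -/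
noncomputable def deform {A : Type u} [Ring A] [HopfAlgebra k A]
    (σ : A ⊗[k] A →ₗ[k] k) (μ : A ⊗[k] A →ₗ[k] A) (σ' : A ⊗[k] A →ₗ[k] k) :
    A ⊗[k] A →ₗ[k] A :=
  convR (convL σ μ) σ'

/-- The 2-cocycle condition `σ(x₁,y₁)σ(μ(x₂,y₂),z) = σ(y₁,z₁)σ(x,μ(y₂,z₂))`, stated for a
(possibly deformed) multiplication `μ` on `A`. -/
noncomputable def IsCocycle {A : Type u} [Ring A] [HopfAlgebra k A]
    (μ : A ⊗[k] A →ₗ[k] A) (σ : A ⊗[k] A →ₗ[k] k) : Prop :=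
  conv (LinearMap.mul' k k ∘ₗ TensorProduct.map σ Coalgebra.counit)
      (σ ∘ₗ TensorProduct.map μ LinearMap.id) =
    conv ((LinearMap.mul' k k ∘ₗ TensorProduct.map Coalgebra.counit σ) ∘ₗ
        (TensorProduct.assoc k A A A).toLinearMap)
      (σ ∘ₗ TensorProduct.map LinearMap.id μ ∘ₗ (TensorProduct.assoc k A A A).toLinearMap)

/-!
Conjugating linear maps out of a coalgebra by a convolution unit `σ` is an action of the group of
convolution units, compatible with composing with linear maps on the left and with coalgebra
morphisms on the right. The deformed product is the conjugate of the multiplication by `σ`, so each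
of the two iterated deformed products is a conjugate of the ordinary triple product
`(x ⊗ y) ⊗ z ↦ xyz`, by `σ(x₁,y₁) σ(x₂y₂,z)` and by `σ(y₁,z₁) σ(x,y₂z₂)` respectively. The cocycle
condition says that these two units coincide.

At `(1, 1, z)` and `(x, 1, 1)` the cocycle condition makes `σ(1,·)` and `σ(·,1)` idempotent
convolution units, hence trivial, and conjugation by them leaves multiplication by `1` unchanged.
-/

noncomputable section TensorProductCoalgebra

variable (R C D A : Type*) [CommSemiring R] [AddCommMonoid C] [Module R C] [Coalgebra R C]
  [AddCommMonoid D] [Module R D] [Coalgebra R D] [Semiring A] [Bialgebra R A]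

/-- The projection `c ⊗ d ↦ ε(d) c`. -/
def fstCoalgHom : C ⊗[R] D →ₗc[R] C :=
  (Coalgebra.TensorProduct.rid R R C).toCoalgHom.comp
    (Coalgebra.TensorProduct.map (.id R C) (Coalgebra.counitCoalgHom R D))

/-- The projection `c ⊗ d ↦ ε(c) d`. -/
def sndCoalgHom : C ⊗[R] D →ₗc[R] D :=
  (Coalgebra.TensorProduct.lid R D).toCoalgHom.comp
    (Coalgebra.TensorProduct.map (Coalgebra.counitCoalgHom R C) (.id R D))

/-- The insertion `c ↦ 1 ⊗ c`. -/
def oneTmulCoalgHom : C →ₗc[R] A ⊗[R] C :=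
  (Coalgebra.TensorProduct.map (Bialgebra.unitBialgHom R A).toCoalgHom (.id R C)).comp
    (Coalgebra.TensorProduct.lid R C).symm.toCoalgHom

/-- The insertion `c ↦ c ⊗ 1`. -/
def tmulOneCoalgHom : C →ₗc[R] C ⊗[R] A :=
  (Coalgebra.TensorProduct.map (.id R C) (Bialgebra.unitBialgHom R A).toCoalgHom).comp
    (Coalgebra.TensorProduct.rid R R C).symm.toCoalgHom

variable {R C D}

theorem fstCoalgHom_tmul (c : C) (d : D) :
    fstCoalgHom R C D (c ⊗ₜ d) = Coalgebra.counit (R := R) d • c := rfl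

theorem sndCoalgHom_tmul (c : C) (d : D) :
    sndCoalgHom R C D (c ⊗ₜ d) = Coalgebra.counit (R := R) c • d := rfl

theorem oneTmulCoalgHom_apply (c : C) : oneTmulCoalgHom R C A c = 1 ⊗ₜ c :=
  congrArg (· ⊗ₜ[R] c) (map_one (algebraMap R A))

theorem tmulOneCoalgHom_apply (c : C) : tmulOneCoalgHom R C A c = c ⊗ₜ 1 :=
  congrArg (c ⊗ₜ[R] ·) (map_one (algebraMap R A))

end TensorProductCoalgebra

noncomputable section Convolution

open WithConv

variable {R B B' C D : Type*} [CommSemiring R] [Semiring B] [Algebra R B] [Semiring B']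
  [Algebra R B'] [AddCommMonoid C] [Module R C] [Coalgebra R C] [AddCommMonoid D] [Module R D]
  [Coalgebra R D]

/-- The pullback `f ↦ f ∘ h` of convolution algebras along a coalgebra morphism `h`. -/
def convComap (h : C →ₗc[R] D) : WithConv (D →ₗ[R] B) →* WithConv (C →ₗ[R] B) where
  toFun f := toConv (f.ofConv ∘ₗ h.toLinearMap)
  map_one' := by
    ext c
    simp [LinearMap.convOne_def]
  map_mul' f g := congrArg toConv (LinearMap.convMul_comp_coalgHom_distrib f g h)

theorem convComap_apply (h : C →ₗc[R] D) (f : WithConv (D →ₗ[R] B)) (c : C) :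
    convComap h f c = f (h c) := rfl

variable (B) in
/-- Functionals on `C` regarded as `B`-valued maps through `R → B`. -/
def convScalar : WithConv (C →ₗ[R] R) →* WithConv (C →ₗ[R] B) where
  toFun f := toConv (Algebra.linearMap R B ∘ₗ f.ofConv)
  map_one' := rfl
  map_mul' f g := congrArg toConv (LinearMap.algHom_comp_convMul_distrib (Algebra.ofId R B) f g)

theorem convScalar_apply (f : WithConv (C →ₗ[R] R)) (c : C) :
    convScalar B f c = algebraMap R B (f c) := rfl

theorem comp_convScalar_mul (L : B →ₗ[R] B') (f : WithConv (C →ₗ[R] R))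
    (g : WithConv (C →ₗ[R] B)) :
    toConv (L ∘ₗ (convScalar B f * g).ofConv) = convScalar B' f * toConv (L ∘ₗ g.ofConv) := by
  ext c
  simp [(Coalgebra.Repr.arbitrary R c).convMul_apply, convScalar_apply, ← Algebra.smul_def]

theorem comp_mul_convScalar (L : B →ₗ[R] B') (g : WithConv (C →ₗ[R] B))
    (f : WithConv (C →ₗ[R] R)) :
    toConv (L ∘ₗ (g * convScalar B f).ofConv) = toConv (L ∘ₗ g.ofConv) * convScalar B' f := by
  ext c
  simp [(Coalgebra.Repr.arbitrary R c).convMul_apply, convScalar_apply, ← Algebra.smul_def,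
    ← Algebra.commutes]

/-- The twist `c ↦ σ(c₁) g(c₂) σ⁻¹(c₃)` of a linear map `g` by a convolution-invertible
functional `σ`, that is, conjugation by `σ` in the convolution algebra. -/
def convTwist (σ : (WithConv (C →ₗ[R] R))ˣ) (g : C →ₗ[R] B) : C →ₗ[R] B :=
  (convScalar B σ * toConv g * convScalar B ↑σ⁻¹).ofConv

theorem toConv_convTwist (σ : (WithConv (C →ₗ[R] R))ˣ) (g : C →ₗ[R] B) :
    toConv (convTwist σ g) = convScalar B σ * toConv g * convScalar B ↑σ⁻¹ := rfl

theorem convTwist_one (g : C →ₗ[R] B) : convTwist 1 g = g := by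
  simp [convTwist]

theorem convTwist_mul (σ τ : (WithConv (C →ₗ[R] R))ˣ) (g : C →ₗ[R] B) :
    convTwist (σ * τ) g = convTwist σ (convTwist τ g) := by
  simp [convTwist, mul_assoc]

theorem comp_convTwist (L : B →ₗ[R] B') (σ : (WithConv (C →ₗ[R] R))ˣ) (g : C →ₗ[R] B) :
    L ∘ₗ convTwist σ g = convTwist σ (L ∘ₗ g) := by
  apply toConv_injective
  rw [convTwist, comp_mul_convScalar, comp_convScalar_mul, toConv_convTwist]

theorem convTwist_comp_coalgHom (σ : (WithConv (D →ₗ[R] R))ˣ) (g : D →ₗ[R] B) (h : C →ₗc[R] D) :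
    convTwist σ g ∘ₗ h.toLinearMap =
      convTwist (Units.map (convComap h) σ) (g ∘ₗ h.toLinearMap) := by
  apply toConv_injective
  change convComap h (toConv (convTwist σ g)) = _
  rw [toConv_convTwist, map_mul, map_mul]
  rfl

theorem convScalar_convComap_fst (f : WithConv (C →ₗ[R] R)) :
    convScalar (B ⊗[R] B') (convComap (fstCoalgHom R C D) f) =
      toConv (TensorProduct.map (convScalar B f).ofConv
        (1 : WithConv (D →ₗ[R] B')).ofConv) := by
  refine ofConv_injective (TensorProduct.ext' fun c d => ?_)
  simp [convScalar_apply, convComap_apply, fstCoalgHom_tmul, LinearMap.convOne_def,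
    Algebra.algebraMap_eq_smul_one, TensorProduct.smul_tmul', Algebra.TensorProduct.one_def,
    mul_smul]

theorem convScalar_convComap_snd (f : WithConv (D →ₗ[R] R)) :
    convScalar (B ⊗[R] B') (convComap (sndCoalgHom R C D) f) =
      toConv (TensorProduct.map (1 : WithConv (C →ₗ[R] B)).ofConv
        (convScalar B' f).ofConv) := by
  refine ofConv_injective (TensorProduct.ext' fun c d => ?_)
  simp [convScalar_apply, convComap_apply, sndCoalgHom_tmul, LinearMap.convOne_def,
    Algebra.algebraMap_eq_smul_one, TensorProduct.smul_tmul', Algebra.TensorProduct.one_def,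
    smul_smul, mul_comm]

theorem map_convTwist_left (σ : (WithConv (C →ₗ[R] R))ˣ) (g : C →ₗ[R] B) (h : D →ₗ[R] B') :
    TensorProduct.map (convTwist σ g) h =
      convTwist (Units.map (convComap (fstCoalgHom R C D)) σ) (TensorProduct.map g h) := by
  have conv_form : toConv (TensorProduct.map g h) =
      toConv (TensorProduct.map (toConv g).ofConv (toConv h).ofConv) := rfl
  apply toConv_injective
  rw [toConv_convTwist, ← map_inv, Units.coe_map, Units.coe_map,
    convScalar_convComap_fst, convScalar_convComap_fst, conv_form, TensorProduct.map_convMul_map,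
    TensorProduct.map_convMul_map, one_mul, mul_one]
  rfl

theorem map_convTwist_right (σ : (WithConv (D →ₗ[R] R))ˣ) (g : C →ₗ[R] B) (h : D →ₗ[R] B') :
    TensorProduct.map g (convTwist σ h) =
      convTwist (Units.map (convComap (sndCoalgHom R C D)) σ) (TensorProduct.map g h) := by
  have conv_form : toConv (TensorProduct.map g h) =
      toConv (TensorProduct.map (toConv g).ofConv (toConv h).ofConv) := rfl
  apply toConv_injective
  rw [toConv_convTwist, ← map_inv, Units.coe_map, Units.coe_map,
    convScalar_convComap_snd, convScalar_convComap_snd, conv_form, TensorProduct.map_convMul_map,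
    TensorProduct.map_convMul_map, one_mul, mul_one]
  rfl

end Convolution

noncomputable section Cocycle

variable {R A : Type*} [CommSemiring R] [Semiring A] [Bialgebra R A]

variable (R A) in
/-- Multiplication of the first two factors, `(x ⊗ y) ⊗ z ↦ xy ⊗ z`. -/
def mulLeftCoalgHom : (A ⊗[R] A) ⊗[R] A →ₗc[R] A ⊗[R] A :=
  Coalgebra.TensorProduct.map (Bialgebra.mulCoalgHom R A) (.id R A)

variable (R A) in
/-- Multiplication of the last two factors, `(x ⊗ y) ⊗ z ↦ x ⊗ yz`. -/
def mulRightCoalgHom : (A ⊗[R] A) ⊗[R] A →ₗc[R] A ⊗[R] A :=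
  (Coalgebra.TensorProduct.map (.id R A) (Bialgebra.mulCoalgHom R A)).comp
    (Coalgebra.TensorProduct.assoc R R A A A).toCoalgHom

variable (R A) in
/-- The projection onto the last two factors, `(x ⊗ y) ⊗ z ↦ ε(x) y ⊗ z`. -/
def tailCoalgHom : (A ⊗[R] A) ⊗[R] A →ₗc[R] A ⊗[R] A :=
  (sndCoalgHom R A (A ⊗[R] A)).comp (Coalgebra.TensorProduct.assoc R R A A A).toCoalgHom

theorem mulLeftCoalgHom_tmul (x y z : A) :
    mulLeftCoalgHom R A ((x ⊗ₜ y) ⊗ₜ z) = (x * y) ⊗ₜ z := rfl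

theorem mulRightCoalgHom_tmul (x y z : A) :
    mulRightCoalgHom R A ((x ⊗ₜ y) ⊗ₜ z) = x ⊗ₜ (y * z) := rfl

theorem tailCoalgHom_tmul (x y z : A) :
    tailCoalgHom R A ((x ⊗ₜ y) ⊗ₜ z) = Coalgebra.counit (R := R) x • (y ⊗ₜ z) := rfl

/-- The 2-cocycle condition `σ(x₁,y₁) σ(x₂y₂,z) = σ(y₁,z₁) σ(x,y₂z₂)`, as an identity in the
convolution algebra of `A ⊗ A ⊗ A`. -/
def IsTwoCocycle (σ : WithConv (A ⊗[R] A →ₗ[R] R)) : Prop :=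
  convComap (fstCoalgHom R (A ⊗[R] A) A) σ * convComap (mulLeftCoalgHom R A) σ =
    convComap (tailCoalgHom R A) σ * convComap (mulRightCoalgHom R A) σ

/-- The deformed multiplication `x ⊗ y ↦ σ(x₁,y₁) x₂y₂ σ⁻¹(x₃,y₃)`. -/
def deformedMul (σ : (WithConv (A ⊗[R] A →ₗ[R] R))ˣ) : A ⊗[R] A →ₗ[R] A :=
  convTwist σ (LinearMap.mul' R A)

theorem deformedMul_comp_map_left (σ : (WithConv (A ⊗[R] A →ₗ[R] R))ˣ) :
    deformedMul σ ∘ₗ TensorProduct.map (deformedMul σ) .id =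
      convTwist (Units.map (convComap (fstCoalgHom R (A ⊗[R] A) A)) σ *
          Units.map (convComap (mulLeftCoalgHom R A)) σ)
        (LinearMap.mul' R A ∘ₗ (mulLeftCoalgHom R A).toLinearMap) := by
  rw [convTwist_mul, ← convTwist_comp_coalgHom]
  have map_eq_convTwist : TensorProduct.map (deformedMul σ) .id =
      convTwist (Units.map (convComap (fstCoalgHom R (A ⊗[R] A) A)) σ)
        (mulLeftCoalgHom R A).toLinearMap :=
    map_convTwist_left σ (LinearMap.mul' R A) .id
  rw [map_eq_convTwist, comp_convTwist]
  rfl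

theorem deformedMul_comp_map_right (σ : (WithConv (A ⊗[R] A →ₗ[R] R))ˣ) :
    deformedMul σ ∘ₗ TensorProduct.map .id (deformedMul σ) ∘ₗ
        (TensorProduct.assoc R A A A).toLinearMap =
      convTwist (Units.map (convComap (tailCoalgHom R A)) σ *
          Units.map (convComap (mulRightCoalgHom R A)) σ)
        (LinearMap.mul' R A ∘ₗ (mulRightCoalgHom R A).toLinearMap) := by
  rw [convTwist_mul, ← convTwist_comp_coalgHom]
  have map_eq_convTwist : TensorProduct.map .id (deformedMul σ) ∘ₗ
        (TensorProduct.assoc R A A A).toLinearMap =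
      convTwist (Units.map (convComap (tailCoalgHom R A)) σ)
        (mulRightCoalgHom R A).toLinearMap := by
    rw [deformedMul, map_convTwist_right]
    exact convTwist_comp_coalgHom _ _ (Coalgebra.TensorProduct.assoc R R A A A).toCoalgHom
  rw [map_eq_convTwist, comp_convTwist]
  rfl

theorem mul_comp_mulLeftCoalgHom :
    LinearMap.mul' R A ∘ₗ (mulLeftCoalgHom R A).toLinearMap =
      LinearMap.mul' R A ∘ₗ (mulRightCoalgHom R A).toLinearMap :=
  TensorProduct.ext_threefold mul_assoc

theorem IsTwoCocycle.deformedMul_assoc {σ : (WithConv (A ⊗[R] A →ₗ[R] R))ˣ}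
    (hσ : IsTwoCocycle σ.val) :
    deformedMul σ ∘ₗ TensorProduct.map (deformedMul σ) .id =
      deformedMul σ ∘ₗ TensorProduct.map .id (deformedMul σ) ∘ₗ
        (TensorProduct.assoc R A A A).toLinearMap := by
  have cocycle : Units.map (convComap (fstCoalgHom R (A ⊗[R] A) A)) σ *
      Units.map (convComap (mulLeftCoalgHom R A)) σ =
    Units.map (convComap (tailCoalgHom R A)) σ * Units.map (convComap (mulRightCoalgHom R A)) σ :=
    Units.ext hσ
  rw [deformedMul_comp_map_left, deformedMul_comp_map_right, cocycle,
    mul_comp_mulLeftCoalgHom]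

theorem IsTwoCocycle.isIdempotentElem_convComap_oneTmul {σ : WithConv (A ⊗[R] A →ₗ[R] R)}
    (hσ : IsTwoCocycle σ) (hσ1 : σ (1 ⊗ₜ 1) = 1) :
    IsIdempotentElem (convComap (oneTmulCoalgHom R A A) σ) := by
  let insertion := oneTmulCoalgHom R A (A ⊗[R] A)
  have fst : convComap insertion (convComap (fstCoalgHom R (A ⊗[R] A) A) σ) = 1 := by
    ext z
    simp [insertion, convComap_apply, oneTmulCoalgHom_apply, fstCoalgHom_tmul,
      Algebra.TensorProduct.one_def, hσ1]
  have mulLeft : convComap insertion (convComap (mulLeftCoalgHom R A) σ) =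
      convComap (oneTmulCoalgHom R A A) σ := by
    ext z
    simp [insertion, convComap_apply, oneTmulCoalgHom_apply, mulLeftCoalgHom_tmul,
      Algebra.TensorProduct.one_def]
  have tail : convComap insertion (convComap (tailCoalgHom R A) σ) =
      convComap (oneTmulCoalgHom R A A) σ := by
    ext z
    simp [insertion, convComap_apply, oneTmulCoalgHom_apply, tailCoalgHom_tmul,
      Algebra.TensorProduct.one_def]
  have mulRight : convComap insertion (convComap (mulRightCoalgHom R A) σ) =
      convComap (oneTmulCoalgHom R A A) σ := by
    ext z
    simp [insertion, convComap_apply, oneTmulCoalgHom_apply, mulRightCoalgHom_tmul,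
      Algebra.TensorProduct.one_def]
  have pulled := congrArg (convComap insertion) hσ
  rw [map_mul, map_mul, fst, mulLeft, tail, mulRight, one_mul] at pulled
  exact pulled.symm

theorem IsTwoCocycle.isIdempotentElem_convComap_tmulOne {σ : WithConv (A ⊗[R] A →ₗ[R] R)}
    (hσ : IsTwoCocycle σ) (hσ1 : σ (1 ⊗ₜ 1) = 1) :
    IsIdempotentElem (convComap (tmulOneCoalgHom R A A) σ) := by
  let insertion := (tmulOneCoalgHom R (A ⊗[R] A) A).comp (tmulOneCoalgHom R A A)
  have fst : convComap insertion (convComap (fstCoalgHom R (A ⊗[R] A) A) σ) =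
      convComap (tmulOneCoalgHom R A A) σ := by
    ext z
    simp [insertion, convComap_apply, tmulOneCoalgHom_apply, fstCoalgHom_tmul]
  have mulLeft : convComap insertion (convComap (mulLeftCoalgHom R A) σ) =
      convComap (tmulOneCoalgHom R A A) σ := by
    ext z
    simp [insertion, convComap_apply, tmulOneCoalgHom_apply, mulLeftCoalgHom_tmul]
  have tail : convComap insertion (convComap (tailCoalgHom R A) σ) = 1 := by
    ext z
    simp [insertion, convComap_apply, tmulOneCoalgHom_apply, tailCoalgHom_tmul, hσ1]
  have mulRight : convComap insertion (convComap (mulRightCoalgHom R A) σ) =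
      convComap (tmulOneCoalgHom R A A) σ := by
    ext z
    simp [insertion, convComap_apply, tmulOneCoalgHom_apply, mulRightCoalgHom_tmul]
  have pulled := congrArg (convComap insertion) hσ
  rwa [map_mul, map_mul, fst, mulLeft, tail, mulRight, one_mul] at pulled

theorem deformedMul_comp_coalgHom {σ : (WithConv (A ⊗[R] A →ₗ[R] R))ˣ}
    {h : A →ₗc[R] A ⊗[R] A}
    (hσ : IsIdempotentElem (convComap h σ.val))
    (hh : LinearMap.mul' R A ∘ₗ h.toLinearMap = .id) :
    deformedMul σ ∘ₗ h.toLinearMap = .id := by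
  have comap_eq_one : Units.map (convComap h) σ = 1 :=
    IsIdempotentElem.iff_eq_one.mp (Units.ext hσ)
  rw [deformedMul, convTwist_comp_coalgHom, comap_eq_one, convTwist_one, hh]

theorem IsTwoCocycle.deformedMul_one_tmul {σ : (WithConv (A ⊗[R] A →ₗ[R] R))ˣ}
    (hσ : IsTwoCocycle σ.val) (hσ1 : σ.val (1 ⊗ₜ 1) = 1) (x : A) :
    deformedMul σ (1 ⊗ₜ x) = x := by
  have mul_comp_insertion : LinearMap.mul' R A ∘ₗ (oneTmulCoalgHom R A A).toLinearMap = .id := by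
    ext y
    simp [oneTmulCoalgHom_apply]
  simpa [oneTmulCoalgHom_apply] using LinearMap.congr_fun
    (deformedMul_comp_coalgHom (hσ.isIdempotentElem_convComap_oneTmul hσ1) mul_comp_insertion) x

theorem IsTwoCocycle.deformedMul_tmul_one {σ : (WithConv (A ⊗[R] A →ₗ[R] R))ˣ}
    (hσ : IsTwoCocycle σ.val) (hσ1 : σ.val (1 ⊗ₜ 1) = 1) (x : A) :
    deformedMul σ (x ⊗ₜ 1) = x := by
  have mul_comp_insertion : LinearMap.mul' R A ∘ₗ (tmulOneCoalgHom R A A).toLinearMap = .id := by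
    ext y
    simp [tmulOneCoalgHom_apply]
  simpa [tmulOneCoalgHom_apply] using LinearMap.congr_fun
    (deformedMul_comp_coalgHom (hσ.isIdempotentElem_convComap_tmulOne hσ1) mul_comp_insertion) x

theorem deformed_mul_assoc_and_unital_general (σ : (WithConv (A ⊗[R] A →ₗ[R] R))ˣ)
    (hunital : σ.val (1 ⊗ₜ 1) = 1) (hcocycle : IsTwoCocycle σ.val) :
    deformedMul σ ∘ₗ TensorProduct.map (deformedMul σ) .id =
      deformedMul σ ∘ₗ TensorProduct.map .id (deformedMul σ) ∘ₗ
        (TensorProduct.assoc R A A A).toLinearMap ∧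
    (∀ x : A, deformedMul σ (1 ⊗ₜ x) = x) ∧ ∀ x : A, deformedMul σ (x ⊗ₜ 1) = x :=
  ⟨hcocycle.deformedMul_assoc, hcocycle.deformedMul_one_tmul hunital,
    hcocycle.deformedMul_tmul_one hunital⟩

end Cocycle

section Comparison

open WithConv

theorem toConv_convL {C B : Type u} [AddCommGroup C] [Module k C] [Coalgebra k C] [Ring B]
    [Algebra k B] (φ : C →ₗ[k] k) (μ : C →ₗ[k] B) :
    toConv (convL φ μ) = convScalar B (toConv φ) * toConv μ := by
  ext c
  simp [convL, (Coalgebra.Repr.arbitrary k c).convMul_apply, convScalar_apply,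
    ← (Coalgebra.Repr.arbitrary k c).eq, Algebra.smul_def]

theorem toConv_convR {C B : Type u} [AddCommGroup C] [Module k C] [Coalgebra k C] [Ring B]
    [Algebra k B] (μ : C →ₗ[k] B) (φ : C →ₗ[k] k) :
    toConv (convR μ φ) = toConv μ * convScalar B (toConv φ) := by
  ext c
  simp [convR, (Coalgebra.Repr.arbitrary k c).convMul_apply, convScalar_apply,
    ← (Coalgebra.Repr.arbitrary k c).eq, Algebra.smul_def, Algebra.commutes]

variable {A : Type u} [Ring A] [HopfAlgebra k A]

theorem deform_eq_convTwist (σ : (WithConv (A ⊗[k] A →ₗ[k] k))ˣ) (μ : A ⊗[k] A →ₗ[k] A) :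
    deform σ.val.ofConv μ (σ⁻¹).val.ofConv = convTwist σ μ := by
  apply toConv_injective
  rw [deform, toConv_convR, toConv_convL, toConv_convTwist]

theorem IsCocycle.isTwoCocycle {σ : A ⊗[k] A →ₗ[k] k} (hσ : IsCocycle (LinearMap.mul' k A) σ) :
    IsTwoCocycle (toConv σ) := by
  have fst : convComap (fstCoalgHom k (A ⊗[k] A) A) (toConv σ) =
      toConv (LinearMap.mul' k k ∘ₗ TensorProduct.map σ Coalgebra.counit) := by
    refine ofConv_injective (TensorProduct.ext' fun w z => ?_)
    simp [convComap_apply, fstCoalgHom_tmul, mul_comm]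
  have tail : convComap (tailCoalgHom k A) (toConv σ) =
      toConv ((LinearMap.mul' k k ∘ₗ TensorProduct.map Coalgebra.counit σ) ∘ₗ
        (TensorProduct.assoc k A A A).toLinearMap) := by
    refine ofConv_injective (TensorProduct.ext_threefold fun x y z => ?_)
    simp [convComap_apply, tailCoalgHom_tmul]
  rw [IsTwoCocycle, fst, tail]
  exact congrArg toConv hσ

end Comparison

theorem deformed_mul_assoc_and_unital {A : Type u} [Ring A] [HopfAlgebra k A]
    (σ σinv : A ⊗[k] A →ₗ[k] k)
    (hinv : conv σ σinv = Coalgebra.counit ∧ conv σinv σ = Coalgebra.counit)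
    (hunital : σ (1 ⊗ₜ[k] 1) = 1)
    (hcocycle : IsCocycle (LinearMap.mul' k A) σ) :
    (deform σ (LinearMap.mul' k A) σinv) ∘ₗ
        TensorProduct.map (deform σ (LinearMap.mul' k A) σinv) LinearMap.id =
      (deform σ (LinearMap.mul' k A) σinv) ∘ₗ
        TensorProduct.map LinearMap.id (deform σ (LinearMap.mul' k A) σinv) ∘ₗ
        (TensorProduct.assoc k A A A).toLinearMap ∧
    (∀ x : A, deform σ (LinearMap.mul' k A) σinv (1 ⊗ₜ[k] x) = x) ∧
    (∀ x : A, deform σ (LinearMap.mul' k A) σinv (x ⊗ₜ[k] 1) = x) := by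
  let τ : (WithConv (A ⊗[k] A →ₗ[k] k))ˣ :=
    ⟨.toConv σ, .toConv σinv, congrArg WithConv.toConv hinv.1, congrArg WithConv.toConv hinv.2⟩
  have deform_eq : deform σ (LinearMap.mul' k A) σinv = deformedMul τ := deform_eq_convTwist τ _
  rw [deform_eq]
  exact deformed_mul_assoc_and_unital_general τ hunital hcocycle.isTwoCocycle
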